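/- arXiv:0804.0756 — 5 statements merged into one kernel-verified Lean document; each statement's English description precedes it below -/
import Mathlib

section
/- Let K be a field, S = K[x_1,...,x_n], and let 1 ≤ q ≤ n. Then the Alexander dual of the ideal I_q generated by all square-free monomials of degree q satisfies I_q^* = I_{n-q+1}; equivalently, the intersection over all subsets σ ⊆ {1,...,n} with |σ| = q of the ideals (x_j : j ∈ σ) equals the ideal generated by all square-free monomials of degree n-q+1 in x_1,...,x_n. -/
/-!
Both sides are monomial ideals, so membership is decided one exponent vector at a time, and only
the support of the exponent vector matters. A polynomial lies in `I_q` iff every monomial occurring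
in it involves at least `q` variables (`mem_sqIdeal_iff`). It lies in `⨅ (x_j : j ∈ σ)` over all
`σ` with `q` elements iff the support of each occurring monomial meets every such `σ`, i.e. iff the
complement of the support has fewer than `q` elements, i.e. iff the support has at least `n - q + 1`
elements (`iInf_span_X_eq`).

The Alexander dual as defined ranges over all square-free monomials of `I_q`, not only over the
generators. The extra ones have supports containing some `q`-element set, so they contribute
larger ideals and do not change the intersection.
-/

open MvPolynomial

/-- `sqIdeal K n q` is the ideal of `K[x_1,…,x_n]` generated by all square-free
monomials of degree `q` in the variables `x_1,…,x_n`. -/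
noncomputable def sqIdeal (K : Type) [Field K] (n q : ℕ) : Ideal (MvPolynomial (Fin n) K) :=
  Ideal.span {f | ∃ s : Finset (Fin n), s.card = q ∧ f = ∏ i ∈ s, X i}

/-- The Alexander dual of a square-free monomial ideal: the intersection of the ideals
generated by the variables in the support of each square-free monomial of `I`
(for a square-free monomial ideal this agrees with the intersection over a minimal
set of monomial generators). -/
noncomputable def alexanderDual {K : Type} [Field K] {N : ℕ}
    (I : Ideal (MvPolynomial (Fin N) K)) : Ideal (MvPolynomial (Fin N) K) :=
  ⨅ s ∈ {s : Finset (Fin N) | (∏ i ∈ s, X i) ∈ I},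
    Ideal.span ((fun i => (X i : MvPolynomial (Fin N) K)) '' ↑s)

/-- The exponent vector of the square-free monomial `∏ i ∈ s, X i`. -/
noncomputable def sqExp {n : ℕ} (s : Finset (Fin n)) : Fin n →₀ ℕ :=
  ∑ i ∈ s, Finsupp.single i 1

lemma sqExp_apply {n : ℕ} (s : Finset (Fin n)) (j : Fin n) :
    sqExp s j = if j ∈ s then 1 else 0 := by
  simp [sqExp, Finsupp.finsetSum_apply, Finsupp.single_apply]

lemma support_sqExp {n : ℕ} (s : Finset (Fin n)) : (sqExp s).support = s := by
  ext j
  simp [sqExp_apply]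

lemma sqExp_le_iff {n : ℕ} (s : Finset (Fin n)) (m : Fin n →₀ ℕ) :
    sqExp s ≤ m ↔ s ⊆ m.support := by
  constructor
  · intro h
    have := Finsupp.support_mono h
    rwa [support_sqExp] at this
  · intro h j
    rw [sqExp_apply]
    split_ifs with hj
    · exact Nat.one_le_iff_ne_zero.mpr (Finsupp.mem_support_iff.mp (h hj))
    · exact Nat.zero_le _

lemma prod_X_eq_monomial {K : Type} [Field K] {n : ℕ} (s : Finset (Fin n)) :
    (∏ i ∈ s, X i : MvPolynomial (Fin n) K) = monomial (sqExp s) 1 := by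
  rw [sqExp, monomial_sum_one]
  rfl

lemma mem_sqIdeal_iff {K : Type} [Field K] {n q : ℕ} (f : MvPolynomial (Fin n) K) :
    f ∈ sqIdeal K n q ↔ ∀ m ∈ f.support, q ≤ m.support.card := by
  have h : sqIdeal K n q = Ideal.span ((fun e => monomial e (1 : K)) ''
      {e | ∃ s : Finset (Fin n), s.card = q ∧ sqExp s = e}) := by
    rw [sqIdeal]
    congr 1
    ext g
    constructor
    · rintro ⟨s, hs, rfl⟩
      exact ⟨_, ⟨s, hs, rfl⟩, (prod_X_eq_monomial s).symm⟩
    · rintro ⟨_, ⟨s, hs, rfl⟩, rfl⟩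
      exact ⟨s, hs, (prod_X_eq_monomial s).symm⟩
  rw [h, mem_ideal_span_monomial_image]
  refine forall₂_congr fun m _ => ?_
  constructor
  · rintro ⟨_, ⟨s, rfl, rfl⟩, hle⟩
    exact Finset.card_le_card ((sqExp_le_iff s m).mp hle)
  · intro hq
    obtain ⟨s, hs, hc⟩ := Finset.exists_subset_card_eq hq
    exact ⟨_, ⟨s, hc, rfl⟩, (sqExp_le_iff s m).mpr hs⟩

lemma prod_X_mem_sqIdeal_iff {K : Type} [Field K] {n q : ℕ} (s : Finset (Fin n)) :
    (∏ i ∈ s, X i) ∈ sqIdeal K n q ↔ q ≤ s.card := by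
  classical
  rw [mem_sqIdeal_iff, prod_X_eq_monomial, support_monomial, if_neg one_ne_zero]
  simp [support_sqExp]

/-- A subset `t` of an `n`-element set meets every `q`-element subset iff its complement has
fewer than `q` elements. -/
lemma forall_card_eq_exists_mem_iff {n q : ℕ} (h2 : q ≤ n) (t : Finset (Fin n)) :
    (∀ s : Finset (Fin n), s.card = q → ∃ i ∈ s, i ∈ t) ↔ n - q + 1 ≤ t.card := by
  have hc : tᶜ.card + t.card = n := by
    rw [Finset.card_compl_add_card, Fintype.card_fin]
  constructor
  · intro h
    by_contra hlt
    obtain ⟨s, hs, hsq⟩ := Finset.exists_subset_card_eq (show q ≤ tᶜ.card by omega)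
    obtain ⟨i, his, hit⟩ := h s hsq
    exact Finset.mem_compl.mp (hs his) hit
  · intro h s hs
    by_contra! hst
    have : s.card ≤ tᶜ.card :=
      Finset.card_le_card fun i hi => Finset.mem_compl.mpr (hst i hi)
    omega

lemma iInf_span_X_eq (K : Type) [Field K] {n q : ℕ} (h2 : q ≤ n) :
    ⨅ s ∈ {s : Finset (Fin n) | s.card = q},
      Ideal.span ((fun i => (X i : MvPolynomial (Fin n) K)) '' ↑s) = sqIdeal K n (n - q + 1) := by
  ext f
  simp only [Submodule.mem_iInf, Set.mem_ofPred_eq]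
  rw [mem_sqIdeal_iff]
  simp only [← forall_card_eq_exists_mem_iff h2, Finsupp.mem_support_iff]
  constructor
  · intro h m hm s hs
    exact mem_ideal_span_X_image.mp (h s hs) m hm
  · intro h s hs
    exact mem_ideal_span_X_image.mpr fun m hm => h m hm s hs

lemma alexanderDual_sqIdeal_eq_iInf (K : Type) [Field K] (n q : ℕ) :
    alexanderDual (sqIdeal K n q) = ⨅ s ∈ {s : Finset (Fin n) | s.card = q},
      Ideal.span ((fun i => (X i : MvPolynomial (Fin n) K)) '' ↑s) := by
  apply le_antisymm
  · exact le_iInf₂ fun s hs => iInf₂_le s ((prod_X_mem_sqIdeal_iff s).mpr (le_of_eq hs.symm))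
  · refine le_iInf₂ fun s hs => ?_
    obtain ⟨t, hts, htq⟩ := Finset.exists_subset_card_eq ((prod_X_mem_sqIdeal_iff s).mp hs)
    exact (iInf₂_le t htq).trans
      (Ideal.span_mono (Set.image_mono (Finset.coe_subset.mpr hts)))

/-- Proposition 2.2: `(I_q)^* = I_{n-q+1}`; equivalently, the intersection over all
subsets `σ ⊆ {1,…,n}` with `|σ| = q` of the ideals `(x_j : j ∈ σ)` equals the ideal
generated by all square-free monomials of degree `n-q+1`. -/
theorem alexanderDual_sqIdeal (K : Type) [Field K] (n q : ℕ) (h1 : 1 ≤ q) (h2 : q ≤ n) :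
    alexanderDual (sqIdeal K n q) = sqIdeal K n (n - q + 1) ∧
    ⨅ s ∈ {s : Finset (Fin n) | s.card = q},
      Ideal.span ((fun i => (X i : MvPolynomial (Fin n) K)) '' ↑s) = sqIdeal K n (n - q + 1) :=
  ⟨(alexanderDual_sqIdeal_eq_iInf K n q).trans (iInf_span_X_eq K h2), iInf_span_X_eq K h2⟩
end

section
/- Let K be a field, S = K[x_1,...,x_n,y_1,...,y_m], 1 ≤ q ≤ n and 1 ≤ r ≤ m. Then the Alexander dual of the product ideal I_q J_r satisfies (I_q J_r)^* = I_{n-q+1} + J_{m-r+1}. -/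
/-!
A monomial lies in `I_q` (resp. `J_r`) exactly when its support contains at least `q` of the
`x`-variables (resp. at least `r` of the `y`-variables), and an ideal generated by variables
contains exactly the polynomials all of whose monomials involve one of these variables.
So both sides are governed by supports, and everything reduces to counting: a set of
variables meets every set containing at least `q` of the `x`'s and `r` of the `y`'s if and only if
its complement misses this condition, i.e. it contains at least `n - q + 1` of the `x`'s or
at least `m - r + 1` of the `y`'s.

The two membership facts are stated once for the ideal generated by the square-free monomials of
degree `q` in the variables satisfying a predicate `P`: `le_card_of_prod_mem_sqfreeIdeal` and
`monomial_mem_sqfreeIdeal`. The counting is `inter_nonempty_of_card` for `⊇` and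
`exists_subset_disjoint` for `⊆`.
-/


open MvPolynomial

/-- `Iq K n m q` is the ideal of `S = K[x_1,…,x_n,y_1,…,y_m]` (realized as the polynomial
ring on `Fin (n+m)`, the first `n` indices being the `x`-variables) generated by all
square-free monomials of degree `q` in the `x`-variables.  For `q = 0` it is the unit ideal. -/
noncomputable def Iq (K : Type) [Field K] (n m q : ℕ) : Ideal (MvPolynomial (Fin (n + m)) K) :=
  Ideal.span {f | ∃ s : Finset (Fin (n + m)), (∀ i ∈ s, (i : ℕ) < n) ∧ s.card = q ∧
    f = ∏ i ∈ s, X i}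

/-- `Jr K n m r` is the ideal of `S = K[x_1,…,x_n,y_1,…,y_m]` generated by all square-free
monomials of degree `r` in the `y`-variables (the last `m` indices of `Fin (n+m)`).
For `r = 0` it is the unit ideal. -/
noncomputable def Jr (K : Type) [Field K] (n m r : ℕ) : Ideal (MvPolynomial (Fin (n + m)) K) :=
  Ideal.span {f | ∃ s : Finset (Fin (n + m)), (∀ i ∈ s, n ≤ (i : ℕ)) ∧ s.card = r ∧
    f = ∏ i ∈ s, X i}

/-- The ideal generated by the square-free monomials of degree `q` in the variables satisfying
`P`; `Iq` and `Jr` unfold to instances of it. -/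
noncomputable def sqfreeIdeal (K : Type) [Field K] {N : ℕ} (P : Fin N → Prop) (q : ℕ) :
    Ideal (MvPolynomial (Fin N) K) :=
  Ideal.span {f | ∃ s : Finset (Fin N), (∀ i ∈ s, P i) ∧ s.card = q ∧ f = ∏ i ∈ s, X i}

/-- Evaluating at the indicator vector of `s` sends `∏ i ∈ s, X i` to `1`, but kills every
generator of the ideal if `s` has fewer than `q` elements satisfying `P`. -/
theorem le_card_of_prod_mem_sqfreeIdeal {K : Type} [Field K] {N : ℕ} {P : Fin N → Prop}
    [DecidablePred P] {q : ℕ} {s : Finset (Fin N)}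
    (h : (∏ i ∈ s, X i : MvPolynomial (Fin N) K) ∈ sqfreeIdeal K P q) :
    q ≤ (s.filter P).card := by
  by_contra! hlt
  let φ : MvPolynomial (Fin N) K →+* K := eval (fun i => if i ∈ s then 1 else 0)
  have hle : sqfreeIdeal K P q ≤ RingHom.ker φ := by
    refine Ideal.span_le.2 ?_
    rintro _ ⟨t, ht, hc, rfl⟩
    have hnot : ¬ t ⊆ s := fun hts => by
      have := Finset.card_le_card
        (fun i hi => Finset.mem_filter.2 ⟨hts hi, ht i hi⟩ : t ⊆ s.filter P)
      omega
    obtain ⟨i, hit, his⟩ := Finset.not_subset.1 hnot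
    change φ _ = 0
    rw [map_prod]
    exact Finset.prod_eq_zero hit (by simp [φ, his])
  have h0 : φ (∏ i ∈ s, X i) = 0 := hle h
  rw [map_prod, Finset.prod_eq_one (fun i hi => by simp [φ, hi])] at h0
  exact one_ne_zero h0

theorem monomial_mem_sqfreeIdeal {K : Type} [Field K] {N : ℕ} {P : Fin N → Prop}
    [DecidablePred P] {q : ℕ} {d : Fin N →₀ ℕ} (c : K) (h : q ≤ (d.support.filter P).card) :
    monomial d c ∈ sqfreeIdeal K P q := by
  obtain ⟨t, ht, hc⟩ := Finset.exists_subset_card_eq h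
  refine Ideal.mem_of_dvd _ ?_
    (Ideal.subset_span ⟨t, fun i hi => (Finset.mem_filter.1 (ht hi)).2, hc, rfl⟩)
  rw [monomial_eq, Finsupp.prod]
  refine Dvd.dvd.mul_left ?_ _
  refine (Finset.prod_dvd_prod_of_subset _ _ _ (ht.trans (Finset.filter_subset _ _))).trans ?_
  exact Finset.prod_dvd_prod_of_dvd _ _
    fun i hi => dvd_pow_self _ (Finsupp.mem_support_iff.1 hi)

/-- Pigeonhole: among `k` variables satisfying `P`, a set of `k - q + 1` of them meets every set
containing at least `q` of them. -/
theorem inter_nonempty_of_card {N k q : ℕ} {P : Fin N → Prop} [DecidablePred P]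
    (hk : (Finset.univ.filter P).card = k) {s t : Finset (Fin N)} (ht : ∀ i ∈ t, P i)
    (htc : t.card = k - q + 1) (hs : q ≤ (s.filter P).card) : ∃ i ∈ t, i ∈ s := by
  by_contra! hdis
  have hd : Disjoint t (s.filter P) :=
    Finset.disjoint_left.2 fun i hi hi' => hdis i hi (Finset.mem_filter.1 hi').1
  have hsub : t ∪ s.filter P ⊆ Finset.univ.filter P := by
    intro i hi
    rcases Finset.mem_union.1 hi with hi | hi
    · simpa using ht i hi
    · simpa using (Finset.mem_filter.1 hi).2
  have := Finset.card_le_card hsub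
  rw [Finset.card_union_of_disjoint hd] at this
  omega

theorem exists_subset_disjoint {N k q : ℕ} {P : Fin N → Prop} [DecidablePred P]
    (hk : (Finset.univ.filter P).card = k) (hqk : q ≤ k) {u : Finset (Fin N)}
    (hu : (u.filter P).card < k - q + 1) :
    ∃ s : Finset (Fin N), (∀ i ∈ s, P i) ∧ s.card = q ∧ ∀ i ∈ s, i ∉ u := by
  have hq : q ≤ (Finset.univ.filter P \ u.filter P).card := by
    have := Finset.le_card_sdiff (u.filter P) (Finset.univ.filter P)
    omega
  obtain ⟨s, hs, hc⟩ := Finset.exists_subset_card_eq hq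
  refine ⟨s, fun i hi => ?_, hc, fun i hi hiu => ?_⟩
  · have := hs hi
    simp at this
    exact this.1
  · have := hs hi
    simp at this
    exact this.2 hiu this.1

theorem card_filter_lt (n m : ℕ) :
    (Finset.univ.filter fun i : Fin (n + m) => (i : ℕ) < n).card = n := by
  have h : (Finset.univ.filter fun i : Fin (n + m) => (i : ℕ) < n) =
      Finset.univ.map (Fin.castAddEmb m) := by
    ext i
    simp only [Finset.mem_filter, Finset.mem_univ, true_and, Finset.mem_map]
    exact ⟨fun hi => ⟨⟨i, hi⟩, rfl⟩, by rintro ⟨j, rfl⟩; exact j.2⟩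
  rw [h, Finset.card_map, Finset.card_univ, Fintype.card_fin]

theorem card_filter_ge (n m : ℕ) :
    (Finset.univ.filter fun i : Fin (n + m) => n ≤ (i : ℕ)).card = m := by
  have h := Finset.card_filter_add_card_filter_not (s := Finset.univ)
    (fun i : Fin (n + m) => (i : ℕ) < n)
  rw [card_filter_lt] at h
  simp only [not_lt, Finset.card_univ, Fintype.card_fin] at h
  omega

theorem sqfreeIdeal_le_span_X {K : Type} [Field K] {N k q : ℕ} {P : Fin N → Prop}
    [DecidablePred P] (hk : (Finset.univ.filter P).card = k) {s : Finset (Fin N)}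
    (hs : (∏ i ∈ s, X i : MvPolynomial (Fin N) K) ∈ sqfreeIdeal K P q) :
    sqfreeIdeal K P (k - q + 1) ≤
      Ideal.span ((fun i => (X i : MvPolynomial (Fin N) K)) '' ↑s) := by
  refine Ideal.span_le.2 ?_
  rintro _ ⟨t, ht, hc, rfl⟩
  obtain ⟨i, hit, his⟩ := inter_nonempty_of_card hk ht hc (le_card_of_prod_mem_sqfreeIdeal hs)
  exact Ideal.mem_of_dvd _ (Finset.dvd_prod_of_mem _ hit)
    (Ideal.subset_span (Set.mem_image_of_mem _ his))

/-- Corollary 2.4: `(I_q J_r)^* = I_{n-q+1} + J_{m-r+1}`. -/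
theorem alexanderDual_prod (K : Type) [Field K] (n m q r : ℕ)
    (hq1 : 1 ≤ q) (hqn : q ≤ n) (hr1 : 1 ≤ r) (hrm : r ≤ m) :
    alexanderDual (Iq K n m q * Jr K n m r) = Iq K n m (n - q + 1) + Jr K n m (m - r + 1) := by
  apply le_antisymm
  · intro f hf
    simp only [alexanderDual, Ideal.mem_iInf, Set.mem_ofPred_eq] at hf
    rw [← support_sum_monomial_coeff f]
    refine Ideal.sum_mem _ fun d hd => ?_
    by_cases hx : n - q + 1 ≤ (d.support.filter fun i : Fin (n + m) => (i : ℕ) < n).card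
    · exact Ideal.mem_sup_left (monomial_mem_sqfreeIdeal _ hx)
    by_cases hy : m - r + 1 ≤ (d.support.filter fun i : Fin (n + m) => n ≤ (i : ℕ)).card
    · exact Ideal.mem_sup_right (monomial_mem_sqfreeIdeal _ hy)
    -- Otherwise `A ∪ B` below is the support of a generator of `I_q J_r` disjoint from `d`.
    exfalso
    obtain ⟨A, hA, hAc, hAd⟩ := exists_subset_disjoint (card_filter_lt n m) hqn (not_le.1 hx)
    obtain ⟨B, hB, hBc, hBd⟩ := exists_subset_disjoint (card_filter_ge n m) hrm (not_le.1 hy)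
    have hAB : Disjoint A B :=
      Finset.disjoint_left.2 fun i hi hi' => absurd (hA i hi) (not_lt.2 (hB i hi'))
    have hf' := hf (A ∪ B) (by
      rw [Finset.prod_union hAB]
      exact Ideal.mul_mem_mul (Ideal.subset_span ⟨A, hA, hAc, rfl⟩)
        (Ideal.subset_span ⟨B, hB, hBc, rfl⟩))
    obtain ⟨i, hi, hid⟩ := mem_ideal_span_X_image.1 hf' d hd
    have hid' := Finsupp.mem_support_iff.2 hid
    rcases Finset.mem_union.1 hi with hi | hi
    · exact hAd i hi hid'
    · exact hBd i hi hid'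
  · refine le_iInf₂ fun s hs => ?_
    have hs' : (∏ i ∈ s, X i : MvPolynomial (Fin (n + m)) K) ∈ Iq K n m q * Jr K n m r := hs
    have hx : (∏ i ∈ s, X i : MvPolynomial (Fin (n + m)) K) ∈ Iq K n m q :=
      Ideal.mul_le_left hs'
    have hy : (∏ i ∈ s, X i : MvPolynomial (Fin (n + m)) K) ∈ Jr K n m r :=
      Ideal.mul_le_right hs'
    exact sup_le (sqfreeIdeal_le_span_X (card_filter_lt n m) hx)
      (sqfreeIdeal_le_span_X (card_filter_ge n m) hy)
end

section
/- Let K be a field, S = K[x_1,...,x_n,y_1,...,y_m], and let 1 ≤ q < s ≤ n and 1 ≤ t < r ≤ m. Then the Alexander dual of the mixed product ideal satisfies (I_q J_r + I_s J_t)^* = I_{n-q+1} + I_{n-s+1} J_{m-r+1} + J_{m-t+1}. In particular, the class of mixed product ideals is not closed under Alexander duality. -/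
/-!
All ideals involved are spanned by square-free monomials `∏ i ∈ u, X i`, with `u` ranging over some
family `T` of sets of variables (`squarefreeIdeal`). A polynomial `p` lies in such an ideal iff for
every monomial of `p` some `u ∈ T` is contained in the support `F` of that monomial
(`mem_squarefreeIdeal`). It lies in the Alexander dual iff every such `F` meets every `u ∈ T`, that
is, iff no `u ∈ T` is contained in the complement of `F` (`mem_alexanderDual`).

For the families at hand, containing some `u ∈ T` depends only on the numbers `a` and `b` of
`x`-variables and `y`-variables in `F`, whose complement has `n - a` and `m - b` of them. The
theorem thus reduces to the fact that
`¬ ((q ≤ n - a ∧ r ≤ m - b) ∨ (s ≤ n - a ∧ t ≤ m - b))` is equivalent to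
`n - q < a ∨ (n - s < a ∧ m - r < b) ∨ m - t < b`, which holds because `q < s` and `t < r`.
-/

open MvPolynomial

/-- The square-free monomial ideal spanned by the products of variables over the members of `T`. -/
noncomputable def squarefreeIdeal (K : Type) [Field K] {N : ℕ} (T : Set (Finset (Fin N))) :
    Ideal (MvPolynomial (Fin N) K) :=
  Ideal.span ((fun u => ∏ i ∈ u, X i) '' T)

section squarefreeIdeal

variable {K : Type} [Field K] {N : ℕ}

lemma prod_X_eq_monomial_s3 (u : Finset (Fin N)) :
    (∏ i ∈ u, X i : MvPolynomial (Fin N) K) =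
      monomial (Finsupp.indicator u fun _ _ => 1) 1 := by
  simpa using prod_X_pow (R := K) (fun _ => 1) u

lemma indicator_one_le_iff (u : Finset (Fin N)) (e : Fin N →₀ ℕ) :
    (Finsupp.indicator u fun _ _ => 1) ≤ e ↔ u ⊆ e.support := by
  simp only [Finsupp.le_def, Finsupp.indicator_apply, Finset.subset_iff, Finsupp.mem_support_iff]
  refine forall_congr' fun i => ?_
  split_ifs with h <;> simp [h, Nat.one_le_iff_ne_zero]

lemma mem_squarefreeIdeal {T : Set (Finset (Fin N))} {p : MvPolynomial (Fin N) K} :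
    p ∈ squarefreeIdeal K T ↔ ∀ e ∈ p.support, ∃ u ∈ T, u ⊆ e.support := by
  have h := mem_ideal_span_monomial_image (R := K) (x := p)
    (s := (fun u : Finset (Fin N) => Finsupp.indicator u fun _ _ => 1) '' T)
  rw [Set.image_image] at h
  simp only [squarefreeIdeal, prod_X_eq_monomial_s3, h, Set.exists_mem_image, indicator_one_le_iff]

lemma prod_X_mem_squarefreeIdeal {T : Set (Finset (Fin N))} {v : Finset (Fin N)} :
    (∏ i ∈ v, X i : MvPolynomial (Fin N) K) ∈ squarefreeIdeal K T ↔ ∃ u ∈ T, u ⊆ v := by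
  have hv : (Finsupp.indicator v fun _ _ => 1 : Fin N →₀ ℕ).support = v := by
    ext i; simp [Finsupp.indicator_apply]
  classical
  rw [mem_squarefreeIdeal, prod_X_eq_monomial_s3, support_monomial, if_neg one_ne_zero]
  simp [hv]

/-- The intersection over all square-free monomials in the ideal may be taken over the spanning
family alone, since enlarging `u` enlarges the ideal spanned by its variables. -/
lemma mem_alexanderDual {T : Set (Finset (Fin N))} {p : MvPolynomial (Fin N) K} :
    p ∈ alexanderDual (squarefreeIdeal K T) ↔
      ∀ e ∈ p.support, ¬ ∃ u ∈ T, u ⊆ e.supportᶜ := by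
  simp only [alexanderDual, Submodule.mem_iInf, Set.mem_ofPred_eq, prod_X_mem_squarefreeIdeal,
    mem_ideal_span_X_image]
  constructor
  · rintro h e he ⟨u, hu, hue⟩
    obtain ⟨i, hi, hi'⟩ := h u ⟨u, hu, subset_rfl⟩ e he
    have := hue hi
    simp [hi'] at this
  · rintro h v ⟨u, hu, huv⟩ e he
    by_contra! hv
    exact h e he ⟨u, hu, fun i hi => by simpa using hv i (huv hi)⟩

lemma squarefreeIdeal_add (T T' : Set (Finset (Fin N))) :
    squarefreeIdeal K T + squarefreeIdeal K T' = squarefreeIdeal K (T ∪ T') := by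
  simp only [squarefreeIdeal, Set.image_union, Ideal.span_union, Submodule.add_eq_sup]

end squarefreeIdeal

section mixed

variable (K : Type) [Field K] {n m : ℕ}

/-- The sets of variables consisting of exactly `q` of the `x`-variables. -/
def xSets (n m q : ℕ) : Set (Finset (Fin (n + m))) :=
  {u | (∀ i ∈ u, (i : ℕ) < n) ∧ u.card = q}

/-- The sets of variables consisting of exactly `r` of the `y`-variables. -/
def ySets (n m r : ℕ) : Set (Finset (Fin (n + m))) :=
  {u | (∀ i ∈ u, n ≤ (i : ℕ)) ∧ u.card = r}

/-- The sets of variables consisting of exactly `q` of the `x`-variables and `r` of the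
`y`-variables. -/
def xySets (n m q r : ℕ) : Set (Finset (Fin (n + m))) :=
  {w | ∃ u ∈ xSets n m q, ∃ v ∈ ySets n m r, u ∪ v = w}

/-- The number of `x`-variables in `F`. -/
def xCard (F : Finset (Fin (n + m))) : ℕ := (F.filter fun i : Fin (n + m) => (i : ℕ) < n).card

/-- The number of `y`-variables in `F`. -/
def yCard (F : Finset (Fin (n + m))) : ℕ := (F.filter fun i : Fin (n + m) => n ≤ (i : ℕ)).card

lemma Iq_eq_squarefreeIdeal (q : ℕ) : Iq K n m q = squarefreeIdeal K (xSets n m q) := by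
  simp only [Iq, squarefreeIdeal, xSets, Set.image, Set.mem_ofPred_eq, and_assoc, eq_comm]

lemma Jr_eq_squarefreeIdeal (r : ℕ) : Jr K n m r = squarefreeIdeal K (ySets n m r) := by
  simp only [Jr, squarefreeIdeal, ySets, Set.image, Set.mem_ofPred_eq, and_assoc, eq_comm]

lemma Iq_mul_Jr_eq_squarefreeIdeal (q r : ℕ) :
    Iq K n m q * Jr K n m r = squarefreeIdeal K (xySets n m q r) := by
  rw [Iq_eq_squarefreeIdeal, Jr_eq_squarefreeIdeal, squarefreeIdeal, squarefreeIdeal,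
    squarefreeIdeal, Ideal.span_mul_span']
  congr 1
  -- The two factors involve disjoint sets of variables, so their product is again square-free.
  have key : ∀ u ∈ xSets n m q, ∀ v ∈ ySets n m r,
      (∏ i ∈ u ∪ v, X i : MvPolynomial (Fin (n + m)) K) = (∏ i ∈ u, X i) * ∏ i ∈ v, X i := by
    intro u hu v hv
    refine Finset.prod_union (Finset.disjoint_left.2 fun i hi hi' => ?_)
    exact absurd (hu.1 i hi) (not_lt.2 (hv.1 i hi'))
  ext f
  simp only [Set.mem_mul, Set.mem_image, xySets, Set.mem_ofPred_eq]
  constructor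
  · rintro ⟨_, ⟨u, hu, rfl⟩, _, ⟨v, hv, rfl⟩, rfl⟩
    exact ⟨_, ⟨u, hu, v, hv, rfl⟩, key u hu v hv⟩
  · rintro ⟨_, ⟨u, hu, v, hv, rfl⟩, rfl⟩
    exact ⟨_, ⟨u, hu, rfl⟩, _, ⟨v, hv, rfl⟩, (key u hu v hv).symm⟩

lemma exists_mem_xSets_subset_iff {q : ℕ} {F : Finset (Fin (n + m))} :
    (∃ u ∈ xSets n m q, u ⊆ F) ↔ q ≤ xCard F := by
  constructor
  · rintro ⟨u, ⟨hu, rfl⟩, huF⟩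
    exact Finset.card_le_card fun i hi => Finset.mem_filter.2 ⟨huF hi, hu i hi⟩
  · intro h
    obtain ⟨u, hu, hc⟩ := Finset.exists_subset_card_eq h
    exact ⟨u, ⟨fun i hi => (Finset.mem_filter.1 (hu hi)).2, hc⟩,
      hu.trans (Finset.filter_subset _ _)⟩

lemma exists_mem_ySets_subset_iff {r : ℕ} {F : Finset (Fin (n + m))} :
    (∃ u ∈ ySets n m r, u ⊆ F) ↔ r ≤ yCard F := by
  constructor
  · rintro ⟨u, ⟨hu, rfl⟩, huF⟩
    exact Finset.card_le_card fun i hi => Finset.mem_filter.2 ⟨huF hi, hu i hi⟩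
  · intro h
    obtain ⟨u, hu, hc⟩ := Finset.exists_subset_card_eq h
    exact ⟨u, ⟨fun i hi => (Finset.mem_filter.1 (hu hi)).2, hc⟩,
      hu.trans (Finset.filter_subset _ _)⟩

lemma exists_mem_xySets_subset_iff {q r : ℕ} {F : Finset (Fin (n + m))} :
    (∃ u ∈ xySets n m q r, u ⊆ F) ↔ q ≤ xCard F ∧ r ≤ yCard F := by
  rw [← exists_mem_xSets_subset_iff, ← exists_mem_ySets_subset_iff]
  constructor
  · rintro ⟨_, ⟨u, hu, v, hv, rfl⟩, h⟩
    exact ⟨⟨u, hu, Finset.union_subset_left h⟩, ⟨v, hv, Finset.union_subset_right h⟩⟩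
  · rintro ⟨⟨u, hu, huF⟩, ⟨v, hv, hvF⟩⟩
    exact ⟨_, ⟨u, hu, v, hv, rfl⟩, Finset.union_subset huF hvF⟩

lemma xCard_univ : xCard (Finset.univ : Finset (Fin (n + m))) = n := by
  simp [xCard, Fin.card_filter_val_lt]

lemma yCard_univ : yCard (Finset.univ : Finset (Fin (n + m))) = m := by
  have h := Finset.card_filter_add_card_filter_not (s := (Finset.univ : Finset (Fin (n + m))))
    (fun i => (i : ℕ) < n)
  have hx := xCard_univ (n := n) (m := m)
  simp only [not_lt, Finset.card_univ, Fintype.card_fin] at h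
  unfold xCard at hx
  unfold yCard
  omega

lemma xCard_compl (F : Finset (Fin (n + m))) : xCard F + xCard Fᶜ = n := by
  conv_rhs => rw [← xCard_univ (n := n) (m := m), ← Finset.union_compl F]
  rw [xCard, xCard, xCard, Finset.filter_union, Finset.card_union_of_disjoint]
  exact Finset.disjoint_filter_filter disjoint_compl_right

lemma yCard_compl (F : Finset (Fin (n + m))) : yCard F + yCard Fᶜ = m := by
  conv_rhs => rw [← yCard_univ (n := n) (m := m), ← Finset.union_compl F]
  rw [yCard, yCard, yCard, Finset.filter_union, Finset.card_union_of_disjoint]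
  exact Finset.disjoint_filter_filter disjoint_compl_right

end mixed

/-- Remark 2.5: `(I_q J_r + I_s J_t)^* = I_{n-q+1} + I_{n-s+1} J_{m-r+1} + J_{m-t+1}`,
for `1 ≤ q < s ≤ n` and `1 ≤ t < r ≤ m`. -/
theorem alexanderDual_mixed (K : Type) [Field K] (n m q r s t : ℕ)
    (hq1 : 1 ≤ q) (hqs : q < s) (hsn : s ≤ n) (ht1 : 1 ≤ t) (htr : t < r) (hrm : r ≤ m) :
    alexanderDual (Iq K n m q * Jr K n m r + Iq K n m s * Jr K n m t) =
      Iq K n m (n - q + 1) + Iq K n m (n - s + 1) * Jr K n m (m - r + 1) +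
        Jr K n m (m - t + 1) := by
  rw [Iq_mul_Jr_eq_squarefreeIdeal, Iq_mul_Jr_eq_squarefreeIdeal, Iq_mul_Jr_eq_squarefreeIdeal,
    Iq_eq_squarefreeIdeal, Jr_eq_squarefreeIdeal, squarefreeIdeal_add, squarefreeIdeal_add,
    squarefreeIdeal_add]
  ext p
  rw [mem_alexanderDual, mem_squarefreeIdeal]
  refine forall₂_congr fun e _ => ?_
  simp only [Set.mem_union, or_and_right, exists_or, exists_mem_xSets_subset_iff,
    exists_mem_ySets_subset_iff, exists_mem_xySets_subset_iff]
  have hx := xCard_compl e.support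
  have hy := yCard_compl e.support
  omega
end

section
/- Let K be a field, S = K[x_1,...,x_n,y_1,...,y_m], and let 1 ≤ q < s ≤ n and 1 ≤ t < r ≤ m. Then (I_q J_r) ∩ (I_s J_t) = I_s J_r, and consequently there is a short exact sequence 0 → S/(I_s J_r) → S/(I_q J_r) ⊕ S/(I_s J_t) → S/(I_q J_r + I_s J_t) → 0. -/
/-!
`I_q J_r` is a monomial ideal, generated by the products `x_A y_B` with `#A = q` and `#B = r`.
Hence a polynomial lies in it exactly when each of its monomials involves at least `q` distinct
`x`-variables and at least `r` distinct `y`-variables (`mem_Iq_mul_Jr`).  Under this description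
intersecting two such ideals takes the maximum of the two bounds in each set of variables, and
`max q s = s`, `max r t = r`.

The exact sequence is the usual Mayer-Vietoris sequence of two submodules `A`, `B`: if
`a - b = u + v` with `u ∈ A` and `v ∈ B`, then `a - u = b + v` is a common lift of the classes
of `a` modulo `A` and `b` modulo `B`.
-/

open MvPolynomial

/-- For disjoint `s` and `t`, the square-free monomial with variable set `s ∪ t` divides the
monomial with exponent `d` exactly when all its variables occur in the latter. -/
lemma sum_single_add_le_iff {σ : Type*} {s t : Finset σ} (hst : Disjoint s t) (d : σ →₀ ℕ) :
    (∑ i ∈ s, Finsupp.single i 1) + (∑ i ∈ t, Finsupp.single i 1) ≤ d ↔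
      s ⊆ d.support ∧ t ⊆ d.support := by
  classical
  rw [← Finset.sum_union hst, ← Finset.union_subset_iff]
  have happ : ∀ j, (∑ i ∈ s ∪ t, Finsupp.single i 1 : σ →₀ ℕ) j = if j ∈ s ∪ t then 1 else 0 := by
    intro j
    simp [Finsupp.finsetSum_apply, Finsupp.single_apply]
  constructor
  · intro h j hj
    have := h j
    rw [happ, if_pos hj] at this
    rw [Finsupp.mem_support_iff]
    omega
  · intro h j
    rw [happ]
    split_ifs with hj
    · have := Finsupp.mem_support_iff.1 (h hj)
      omega
    · exact Nat.zero_le _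

lemma Iq_mul_Jr_eq_span (K : Type) [Field K] (n m q r : ℕ) :
    Iq K n m q * Jr K n m r = Ideal.span ((fun e => monomial e (1 : K)) ''
      {e : Fin (n + m) →₀ ℕ | ∃ s t : Finset (Fin (n + m)),
        ((∀ i ∈ s, (i : ℕ) < n) ∧ s.card = q) ∧ ((∀ i ∈ t, n ≤ (i : ℕ)) ∧ t.card = r) ∧
        e = (∑ i ∈ s, Finsupp.single i 1) + (∑ i ∈ t, Finsupp.single i 1)}) := by
  have hmon : ∀ s t : Finset (Fin (n + m)),
      monomial ((∑ i ∈ s, Finsupp.single i 1) + (∑ i ∈ t, Finsupp.single i 1)) (1 : K) =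
        (∏ i ∈ s, X i) * ∏ i ∈ t, X i := by
    intro s t
    rw [← mul_one (1 : K), ← monomial_mul, monomial_sum_one, monomial_sum_one]
    rfl
  rw [Iq, Jr, Ideal.span_mul_span']
  congr 1
  ext f
  simp only [Set.mem_mul, Set.mem_image, Set.mem_ofPred_eq]
  constructor
  · rintro ⟨_, ⟨s, hs, hsc, rfl⟩, _, ⟨t, ht, htc, rfl⟩, rfl⟩
    exact ⟨_, ⟨s, t, ⟨hs, hsc⟩, ⟨ht, htc⟩, rfl⟩, hmon s t⟩
  · rintro ⟨_, ⟨s, t, ⟨hs, hsc⟩, ⟨ht, htc⟩, rfl⟩, rfl⟩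
    exact ⟨_, ⟨s, hs, hsc, rfl⟩, _, ⟨t, ht, htc, rfl⟩, (hmon s t).symm⟩

/-- Membership in `I_q J_r` is decided monomial by monomial: each must involve at least `q` of
the `x`-variables and at least `r` of the `y`-variables. -/
lemma mem_Iq_mul_Jr {K : Type} [Field K] {n m q r : ℕ} {p : MvPolynomial (Fin (n + m)) K} :
    p ∈ Iq K n m q * Jr K n m r ↔ ∀ d ∈ p.support,
      q ≤ (d.support.filter fun i : Fin (n + m) => (i : ℕ) < n).card ∧
      r ≤ (d.support.filter fun i : Fin (n + m) => n ≤ (i : ℕ)).card := by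
  rw [Iq_mul_Jr_eq_span, mem_ideal_span_monomial_image]
  refine forall₂_congr fun d _ => ?_
  have hdisj : ∀ s t : Finset (Fin (n + m)), (∀ i ∈ s, (i : ℕ) < n) → (∀ i ∈ t, n ≤ (i : ℕ)) →
      Disjoint s t := fun s t hs ht =>
    Finset.disjoint_left.2 fun i his hit => absurd (hs i his) (not_lt.2 (ht i hit))
  constructor
  · rintro ⟨_, ⟨s, t, ⟨hs, rfl⟩, ⟨ht, rfl⟩, rfl⟩, hle⟩
    obtain ⟨h1, h2⟩ := (sum_single_add_le_iff (hdisj s t hs ht) d).1 hle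
    exact ⟨Finset.card_le_card fun i hi => Finset.mem_filter.2 ⟨h1 hi, hs i hi⟩,
      Finset.card_le_card fun i hi => Finset.mem_filter.2 ⟨h2 hi, ht i hi⟩⟩
  · rintro ⟨hq, hr⟩
    obtain ⟨s, hs, hsc⟩ := Finset.exists_subset_card_eq hq
    obtain ⟨t, ht, htc⟩ := Finset.exists_subset_card_eq hr
    have hs' : ∀ i ∈ s, (i : ℕ) < n := fun i hi => (Finset.mem_filter.1 (hs hi)).2
    have ht' : ∀ i ∈ t, n ≤ (i : ℕ) := fun i hi => (Finset.mem_filter.1 (ht hi)).2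
    exact ⟨_, ⟨s, t, ⟨hs', hsc⟩, ⟨ht', htc⟩, rfl⟩,
      (sum_single_add_le_iff (hdisj s t hs' ht') d).2
        ⟨fun i hi => (Finset.mem_filter.1 (hs hi)).1, fun i hi => (Finset.mem_filter.1 (ht hi)).1⟩⟩

/-- Intersection formula `(I_q J_r) ∩ (I_s J_t) = I_s J_r` for `q < s`, `t < r`, and the
resulting short exact sequence
`0 → S/(I_q J_r ∩ I_s J_t) → S/(I_q J_r) ⊕ S/(I_s J_t) → S/(I_q J_r + I_s J_t) → 0`
given by the canonical maps `x ↦ (x, x)` and `(a, b) ↦ a - b`. -/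
theorem intersection_ses (K : Type) [Field K] (n m q r s t : ℕ)
    (hq1 : 1 ≤ q) (hqs : q < s) (hsn : s ≤ n) (ht1 : 1 ≤ t) (htr : t < r) (hrm : r ≤ m) :
    Iq K n m q * Jr K n m r ⊓ Iq K n m s * Jr K n m t = Iq K n m s * Jr K n m r ∧
    (let S := MvPolynomial (Fin (n + m)) K
     let A := Iq K n m q * Jr K n m r
     let B := Iq K n m s * Jr K n m t
     let f : (S ⧸ (A ⊓ B)) →ₗ[S] (S ⧸ A) × (S ⧸ B) :=
       LinearMap.prod (Submodule.mapQ (A ⊓ B) A LinearMap.id inf_le_left)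
         (Submodule.mapQ (A ⊓ B) B LinearMap.id inf_le_right)
     let g : (S ⧸ A) × (S ⧸ B) →ₗ[S] S ⧸ (A + B) :=
       (Submodule.mapQ A (A + B) LinearMap.id le_sup_left).comp (LinearMap.fst S _ _) -
         (Submodule.mapQ B (A + B) LinearMap.id le_sup_right).comp (LinearMap.snd S _ _)
     Function.Injective f ∧ Function.Surjective g ∧ LinearMap.range f = LinearMap.ker g) := by
  refine ⟨?_, ?_⟩
  · ext p
    rw [Submodule.mem_inf, mem_Iq_mul_Jr, mem_Iq_mul_Jr, mem_Iq_mul_Jr]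
    constructor
    · rintro ⟨h1, h2⟩ d hd
      exact ⟨(h2 d hd).1, (h1 d hd).2⟩
    · intro h
      exact ⟨fun d hd => ⟨hqs.le.trans (h d hd).1, (h d hd).2⟩,
        fun d hd => ⟨(h d hd).1, htr.le.trans (h d hd).2⟩⟩
  · intro S A B f g
    have hf : ∀ x : S, f (Submodule.Quotient.mk x) =
        (Submodule.Quotient.mk x, Submodule.Quotient.mk x) := fun _ => rfl
    have hg : ∀ a b : S, g (Submodule.Quotient.mk a, Submodule.Quotient.mk b) =
        Submodule.Quotient.mk (a - b) := fun _ _ => rfl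
    refine ⟨?_, ?_, ?_⟩
    · rw [injective_iff_map_eq_zero]
      intro z hz
      obtain ⟨x, rfl⟩ := Submodule.Quotient.mk_surjective _ z
      rw [hf, Prod.mk_eq_zero, Submodule.Quotient.mk_eq_zero, Submodule.Quotient.mk_eq_zero] at hz
      exact (Submodule.Quotient.mk_eq_zero _).2 hz
    · intro z
      obtain ⟨x, rfl⟩ := Submodule.Quotient.mk_surjective _ z
      exact ⟨(Submodule.Quotient.mk x, Submodule.Quotient.mk 0), by rw [hg, sub_zero]⟩
    · ext ⟨a, b⟩
      obtain ⟨a, rfl⟩ := Submodule.Quotient.mk_surjective _ a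
      obtain ⟨b, rfl⟩ := Submodule.Quotient.mk_surjective _ b
      rw [LinearMap.mem_range, LinearMap.mem_ker, hg, Submodule.Quotient.mk_eq_zero]
      constructor
      · rintro ⟨z, hz⟩
        obtain ⟨x, rfl⟩ := Submodule.Quotient.mk_surjective _ z
        rw [hf, Prod.mk.injEq, Submodule.Quotient.eq, Submodule.Quotient.eq] at hz
        have h : a - b = -(x - a) + (x - b) := by ring
        rw [h]
        exact Submodule.add_mem_sup (neg_mem hz.1) hz.2
      · intro h
        obtain ⟨u, hu, v, hv, huv⟩ := Submodule.mem_sup.1 h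
        refine ⟨Submodule.Quotient.mk (a - u), ?_⟩
        rw [hf, Prod.mk.injEq, Submodule.Quotient.eq, Submodule.Quotient.eq]
        have h1 : a - u - a = -u := by ring
        -- the lift `a - u` also equals `b + v`
        have h2 : a - u - b = v := by linear_combination -huv
        rw [h1, h2]
        exact ⟨neg_mem hu, hv⟩
end

section
/- Let K be a field, S = K[x_1,...,x_n,y_1,...,y_m], and let 0 < q ≤ n. Then the quotient ring S/I_q is Cohen-Macaulay and dim S/I_q = m + q - 1. -/
/-!
The elementary symmetric polynomials `e_d, …, e_1` in *all* the variables, with `d = m + q - 1`,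
form a regular sequence on `S/I_q`.

Write `J(A, q, Z) = (x_i : i ∈ Z) + I_q(A)`, where `A` and `Z` are disjoint sets of variables and
`I_q(A)` is spanned by the square-free monomials of degree `q` in the variables of `A`, and put
`d = q - 1 + #(variables outside A ∪ Z)`. Regularity of `e_d, …, e_1` on `S/J(A, q, Z)`
(`regOn_upper`) is proved by induction on `d` and then on `A`:

* for `a ∈ A` and `1 < q ≤ |A|`, with `A' = A \ {a}`, one has `J(A, q, Z) : x_a = J(A', q - 1, Z)`
  and `J(A, q, Z) + (x_a) = J(A', q, Z ∪ {a})`. Both have the same `d`, and a sequence which is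
  regular modulo `J : x` and modulo `J + (x)` is regular modulo `J` (`RegOn.of_colon`);
* for `q = 1` or `q = |A| + 1` the ideal is generated by a set `Z'` of variables, whose complement
  has `d` elements. Modulo it, `e_d` is the product of the variables outside `Z'`, hence a
  nonzerodivisor, and adding it gives `J(Z'ᶜ, d, Z')`, for which `d` has dropped by one
  (`regOn_linear`).

All these ideals are monomial ideals determined by the supports of their monomials, so colons and
sums are computed on supports (`suppIdeal`).

Hence the depth is at least `m + q - 1`. A regular sequence is never longer than the Krull
dimension (`IsRegularSeq.length_le`), and the dimension is at most `m + q - 1` because a prime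
containing `I_q` contains all but at most `q - 1` of the `x`-variables (`dim_Iq_le`).
-/


open MvPolynomial

/-- `l : List R` is a regular sequence on `R`: each `l i` is a nonzerodivisor modulo the
ideal generated by the previous elements, and `l` generates a proper ideal. -/
def IsRegularSeq (R : Type) [CommRing R] (l : List R) : Prop :=
  (∀ (i : ℕ) (hi : i < l.length) (y : R),
      l.get ⟨i, hi⟩ * y ∈ Ideal.span {x | x ∈ l.take i} →
        y ∈ Ideal.span {x | x ∈ l.take i}) ∧
  Ideal.span {x | x ∈ l} ≠ ⊤

/-- The depth of the ideal `J` on the ring `R`: the supremum of the lengths of regular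
sequences on `R` consisting of elements of `J`. -/
noncomputable def ringDepth (R : Type) [CommRing R] (J : Ideal R) : ℕ∞ :=
  sSup {k : ℕ∞ | ∃ l : List R, (∀ x ∈ l, x ∈ J) ∧ IsRegularSeq R l ∧ (l.length : ℕ∞) = k}

/-- A (graded local) ring `R` with distinguished (irrelevant maximal) ideal `J` is
Cohen–Macaulay if `depth R = dim R`, the depth being taken with respect to `J`. -/
def IsCohenMacaulay (R : Type) [CommRing R] (J : Ideal R) : Prop :=
  (ringDepth R J : WithBot ℕ∞) = ringKrullDim R

/-- The irrelevant maximal ideal of `S/L`, `S = K[x_1,…,x_N]`: the image in `S/L` of the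
ideal generated by all the variables. -/
noncomputable def irrelevantMax (K : Type) [Field K] (N : ℕ)
    (L : Ideal (MvPolynomial (Fin N) K)) : Ideal (MvPolynomial (Fin N) K ⧸ L) :=
  Ideal.map (Ideal.Quotient.mk L) (Ideal.span (Set.range X))


/-! ### Regular sequences modulo an ideal -/

/-- Recursive form of "`l` is a (weakly) regular sequence on `R ⧸ J`", phrased with ideals of `R`
only; properness of the final ideal is not part of it. -/
def RegOn {R : Type} [CommRing R] : Ideal R → List R → Prop
  | _, [] => True
  | J, a :: l => (∀ y, a * y ∈ J → y ∈ J) ∧ RegOn (J ⊔ Ideal.span {a}) l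

/-- Regularity passes through the exact sequence
`0 → R/(J : x) → R/J → R/(J + (x)) → 0`; here `C = (J : x)`. -/
lemma RegOn.of_colon {R : Type} [CommRing R] (x : R) (l : List R) (J C : Ideal R)
    (hC : ∀ z, x * z ∈ J ↔ z ∈ C) (h1 : RegOn C l) (h2 : RegOn (J ⊔ Ideal.span {x}) l) :
    RegOn J l := by
  induction l generalizing J C with
  | nil => trivial
  | cons a l ih =>
    obtain ⟨h1a, h1⟩ := h1
    obtain ⟨h2a, h2⟩ := h2
    refine ⟨fun y hy => ?_, ih (J ⊔ Ideal.span {a}) (C ⊔ Ideal.span {a}) ?_ h1 ?_⟩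
    · have := h2a y (Ideal.mem_sup_left hy)
      obtain ⟨j, hj, w, hw, rfl⟩ := Submodule.mem_sup.1 this
      obtain ⟨z, rfl⟩ := Ideal.mem_span_singleton'.1 hw
      refine J.add_mem hj ?_
      have h : x * (a * z) ∈ J := by
        have := J.sub_mem hy (J.mul_mem_left a hj)
        convert this using 1
        ring
      have := (hC z).2 (h1a z ((hC _).1 h))
      rwa [mul_comm]
    · intro z
      constructor
      · intro hz
        obtain ⟨j, hj, w', hw', e⟩ := Submodule.mem_sup.1 hz
        obtain ⟨w, rfl⟩ := Ideal.mem_span_singleton'.1 hw'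
        have hw : a * w ∈ J ⊔ Ideal.span {x} := by
          have : a * w = -j + z * x := by linear_combination e
          rw [this]
          exact Ideal.add_mem _ (Ideal.mem_sup_left (J.neg_mem hj))
            (Ideal.mem_sup_right (Ideal.mul_mem_left _ _ (Ideal.mem_span_singleton_self x)))
        obtain ⟨j', hj', v', hv', rfl⟩ := Submodule.mem_sup.1 (h2a w hw)
        obtain ⟨v, rfl⟩ := Ideal.mem_span_singleton'.1 hv'
        have : z - a * v ∈ C := by
          rw [← hC]
          have : x * (z - a * v) = j + a * j' := by linear_combination -e
          rw [this]
          exact J.add_mem hj (J.mul_mem_left _ hj')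
        rw [← sub_add_cancel z (a * v)]
        exact Ideal.add_mem _ (Ideal.mem_sup_left this)
          (Ideal.mem_sup_right (Ideal.mul_mem_right _ _ (Ideal.mem_span_singleton_self a)))
      · intro hz
        obtain ⟨c, hc, w', hw', rfl⟩ := Submodule.mem_sup.1 hz
        rw [mul_add]
        exact Ideal.add_mem _ (Ideal.mem_sup_left ((hC c).2 hc))
          (Ideal.mem_sup_right (Ideal.mul_mem_left _ _ hw'))
    · rwa [sup_right_comm]

/-- The first element of a regular sequence may be changed modulo the ideal. -/
lemma RegOn.cons_congr {R : Type} [CommRing R] {J : Ideal R} {a b : R} {l : List R}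
    (hab : a - b ∈ J) (h : RegOn J (b :: l)) : RegOn J (a :: l) := by
  refine ⟨fun y hy => h.1 y ?_, ?_⟩
  · have := J.sub_mem hy (J.mul_mem_right y hab)
    convert this using 1
    ring
  · have : J ⊔ Ideal.span {a} = J ⊔ Ideal.span {b} := by
      apply le_antisymm <;> refine sup_le le_sup_left ?_ <;>
        rw [Ideal.span_singleton_le_iff_mem]
      · rw [← sub_add_cancel a b]
        exact Ideal.add_mem _ (Ideal.mem_sup_left hab)
          (Ideal.mem_sup_right (Ideal.mem_span_singleton_self b))
      · rw [← sub_sub_cancel a b]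
        exact Ideal.sub_mem _ (Ideal.mem_sup_right (Ideal.mem_span_singleton_self a))
          (Ideal.mem_sup_left hab)
    rw [this]
    exact h.2

lemma span_mem_cons {R : Type} [CommRing R] (a : R) (l : List R) :
    Ideal.span {x | x ∈ a :: l} = Ideal.span {a} ⊔ Ideal.span {x | x ∈ l} := by
  rw [← Ideal.span_union]
  congr 1
  ext x
  simp

lemma regOn_iff {R : Type} [CommRing R] (J : Ideal R) (l : List R) :
    RegOn J l ↔ ∀ (i : ℕ) (hi : i < l.length) (y : R),
      l.get ⟨i, hi⟩ * y ∈ J ⊔ Ideal.span {x | x ∈ l.take i} →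
        y ∈ J ⊔ Ideal.span {x | x ∈ l.take i} := by
  induction l generalizing J with
  | nil => simp [RegOn]
  | cons a l ih =>
    rw [RegOn, ih]
    constructor
    · rintro ⟨h1, h2⟩ i hi y hy
      cases i with
      | zero => simpa using h1 y (by simpa using hy)
      | succ i =>
        rw [List.take_succ_cons, span_mem_cons, ← sup_assoc] at hy ⊢
        exact h2 i (by simpa using hi) y hy
    · intro h
      refine ⟨fun y hy => ?_, fun i hi y hy => ?_⟩
      · simpa using h 0 (by simp) y (by simpa using hy)
      · have := h (i + 1) (by simpa using hi) y
        rw [List.take_succ_cons, span_mem_cons, ← sup_assoc] at this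
        exact this hy

lemma map_span_list {R : Type} [CommRing R] (I : Ideal R) (l : List R) :
    Ideal.span {x | x ∈ l.map (Ideal.Quotient.mk I)} =
      (Ideal.span {x | x ∈ l}).map (Ideal.Quotient.mk I) := by
  rw [Ideal.map_span]
  congr 1
  ext x
  simp

/-- `RegOn` over the base ring gives a regular sequence in the quotient ring. -/
lemma RegOn.isRegularSeq {R : Type} [CommRing R] {I : Ideal R} {l : List R} (h : RegOn I l)
    (hne : Ideal.span {x | x ∈ l.map (Ideal.Quotient.mk I)} ≠ ⊤) :
    IsRegularSeq (R ⧸ I) (l.map (Ideal.Quotient.mk I)) := by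
  refine ⟨fun i hi y hy => ?_, hne⟩
  obtain ⟨y, rfl⟩ := Ideal.Quotient.mk_surjective y
  have hi' : i < l.length := by simpa using hi
  rw [← List.map_take, map_span_list] at hy ⊢
  rw [List.get_eq_getElem, List.getElem_map, ← map_mul, Ideal.mem_quotient_iff_mem_sup,
    sup_comm] at hy
  rw [Ideal.mem_quotient_iff_mem_sup, sup_comm]
  exact (regOn_iff I l).1 h i hi' y hy

lemma RegOn.length_add_dim_le {R : Type} [CommRing R] (l : List R) (J : Ideal R)
    (h : RegOn J l) :
    ringKrullDim (R ⧸ (J ⊔ Ideal.span {x | x ∈ l})) + (l.length : ℕ) ≤ ringKrullDim (R ⧸ J) := by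
  induction l generalizing J with
  | nil =>
    have : Ideal.span {x | x ∈ ([] : List R)} = ⊥ := Ideal.span_eq_bot.2 (by simp)
    rw [this, sup_bot_eq]
    simp
  | cons a l ih =>
    have h1 := ih _ h.2
    have hnz : Ideal.Quotient.mk J a ∈ nonZeroDivisors (R ⧸ J) := by
      rw [mem_nonZeroDivisors_iff_right]
      intro z hz
      obtain ⟨z, rfl⟩ := Ideal.Quotient.mk_surjective z
      rw [← map_mul, Ideal.Quotient.eq_zero_iff_mem] at hz
      exact Ideal.Quotient.eq_zero_iff_mem.2 (h.1 z (by rwa [mul_comm]))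
    have h2 := ringKrullDim_succ_le_of_surjective
      (Ideal.Quotient.factor (le_sup_left : J ≤ J ⊔ Ideal.span {a}))
      (Ideal.Quotient.factor_surjective _) hnz
      (by
        rw [Ideal.Quotient.factor_mk, Ideal.Quotient.eq_zero_iff_mem]
        exact Ideal.mem_sup_right (Ideal.mem_span_singleton_self a))
    rw [span_mem_cons, ← sup_assoc, List.length_cons]
    refine le_trans ?_ h2
    push_cast
    rw [← add_assoc]
    gcongr

/-- The length of a regular sequence is at most the Krull dimension. -/
lemma IsRegularSeq.length_le {R : Type} [CommRing R] {l : List R} (h : IsRegularSeq R l) :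
    ((l.length : ℕ) : WithBot ℕ∞) ≤ ringKrullDim R := by
  have h1 : RegOn ⊥ l := (regOn_iff _ _).2 (by simpa only [bot_sup_eq] using h.1)
  have h2 := h1.length_add_dim_le
  rw [bot_sup_eq, ringKrullDim_eq_of_ringEquiv (RingEquiv.quotientBot R)] at h2
  have : Nontrivial (R ⧸ Ideal.span {x | x ∈ l}) := Ideal.Quotient.nontrivial_iff.2 h.2
  refine le_trans ?_ h2
  exact le_add_of_nonneg_left ringKrullDim_nonneg_of_nontrivial

/-! ### Square-free monomial ideals and elementary symmetric polynomials -/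

section Monomial

variable {σ : Type} (K : Type) [Field K]

/-- The ideal spanned by all monomials whose support (a finite set of variables) lies in `U`.
For `U` an upper set, this is a square-free monomial ideal (the Stanley–Reisner ideal of the
complement of `U`). -/
noncomputable def suppIdeal (U : Set (Finset σ)) : Ideal (MvPolynomial σ K) :=
  Ideal.span ((fun m => monomial m (1 : K)) '' {m | m.support ∈ U})

lemma mem_suppIdeal {U : Set (Finset σ)} (hU : IsUpperSet U) (f : MvPolynomial σ K) :
    f ∈ suppIdeal K U ↔ ∀ m ∈ f.support, m.support ∈ U := by
  rw [suppIdeal, mem_ideal_span_monomial_image]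
  refine forall₂_congr fun m _ => ⟨?_, fun h => ⟨m, h, le_rfl⟩⟩
  rintro ⟨s, hs, hsm⟩
  exact hU (Finsupp.support_mono hsm) hs

lemma prod_X_eq (F : Finset σ) :
    (∏ i ∈ F, X i : MvPolynomial σ K) = monomial (∑ i ∈ F, Finsupp.single i 1) 1 := by
  rw [monomial_sum_one]
  rfl

variable [DecidableEq σ]

lemma sum_single_apply (F : Finset σ) (i : σ) :
    (∑ j ∈ F, Finsupp.single j 1 : σ →₀ ℕ) i = if i ∈ F then 1 else 0 := by
  simp [Finsupp.finsetSum_apply, Finsupp.single_apply]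

lemma support_add_sum (F : Finset σ) (m : σ →₀ ℕ) :
    ((∑ j ∈ F, Finsupp.single j 1) + m).support = m.support ∪ F := by
  ext i
  simp only [Finsupp.mem_support_iff, Finsupp.add_apply, sum_single_apply, Finset.mem_union]
  split_ifs <;> simp_all

lemma sum_single_le {F : Finset σ} {m : σ →₀ ℕ} (h : F ⊆ m.support) :
    (∑ j ∈ F, Finsupp.single j 1) ≤ m := by
  intro i
  rw [sum_single_apply]
  split_ifs with hi
  · exact Nat.one_le_iff_ne_zero.2 (Finsupp.mem_support_iff.1 (h hi))
  · exact Nat.zero_le _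

lemma prod_mem_suppIdeal {U : Set (Finset σ)} {F : Finset σ} (hF : F ∈ U) :
    (∏ i ∈ F, X i : MvPolynomial σ K) ∈ suppIdeal K U := by
  refine Ideal.subset_span ⟨∑ i ∈ F, Finsupp.single i 1, ?_, (prod_X_eq K F).symm⟩
  have := support_add_sum F 0
  rw [add_zero] at this
  simpa [this] using hF

lemma prod_dvd_monomial {F : Finset σ} {m : σ →₀ ℕ} (h : F ⊆ m.support) :
    (∏ i ∈ F, X i : MvPolynomial σ K) ∣ monomial m 1 := by
  rw [prod_X_eq, monomial_dvd_monomial]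
  exact ⟨Or.inr (sum_single_le h), one_dvd _⟩

/-- The colon ideal `(I_U : x_F)` is the monomial ideal of `{s | s ∪ F ∈ U}`. -/
lemma prod_mul_mem_suppIdeal {U : Set (Finset σ)} (hU : IsUpperSet U) (F : Finset σ)
    (z : MvPolynomial σ K) :
    (∏ i ∈ F, X i) * z ∈ suppIdeal K U ↔ z ∈ suppIdeal K {s | s ∪ F ∈ U} := by
  have hU' : IsUpperSet {s | s ∪ F ∈ U} :=
    fun s t hst hs => hU (Finset.union_subset_union_left hst) hs
  rw [mem_suppIdeal K hU, mem_suppIdeal K hU', prod_X_eq]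
  constructor
  · intro h m hm
    have := h ((∑ j ∈ F, Finsupp.single j 1) + m) (by
      rw [mem_support_iff, coeff_monomial_mul, one_mul]
      exact mem_support_iff.1 hm)
    rwa [support_add_sum] at this
  · intro h m hm
    rw [mem_support_iff, coeff_monomial_mul', ne_eq, ite_eq_right_iff, Classical.not_imp,
      one_mul] at hm
    have := h _ (mem_support_iff.2 hm.2)
    rw [Set.mem_ofPred_eq, ← support_add_sum, add_tsub_cancel_of_le hm.1] at this
    exact this

lemma suppIdeal_sup_prod (U : Set (Finset σ)) (F : Finset σ) :
    suppIdeal K U ⊔ Ideal.span {∏ i ∈ F, X i} = suppIdeal K {s | s ∈ U ∨ F ⊆ s} := by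
  apply le_antisymm
  · refine sup_le (Ideal.span_mono (Set.image_mono fun m hm => Or.inl hm)) ?_
    rw [Ideal.span_singleton_le_iff_mem]
    exact prod_mem_suppIdeal K (Or.inr le_rfl)
  · refine Ideal.span_le.2 ?_
    rintro _ ⟨m, hm | hm, rfl⟩
    · exact Ideal.mem_sup_left (Ideal.subset_span ⟨m, hm, rfl⟩)
    · exact Ideal.mem_sup_right (Ideal.mem_span_singleton.2 (prod_dvd_monomial K hm))

/-- The supports of the monomials in the ideal `(x_i : i ∈ Z) + I_q(A)`, where `I_q(A)` is spanned
by the square-free monomials of degree `q` in the variables indexed by `A`. -/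
def upper (A : Finset σ) (q : ℕ) (Z : Finset σ) : Set (Finset σ) :=
  {s | (∃ i ∈ Z, i ∈ s) ∨ q ≤ (s ∩ A).card}

lemma isUpperSet_upper (A : Finset σ) (q : ℕ) (Z : Finset σ) : IsUpperSet (upper A q Z) := by
  rintro s t hst (⟨i, hi, his⟩ | h)
  · exact Or.inl ⟨i, hi, hst his⟩
  · exact Or.inr (h.trans (Finset.card_le_card (Finset.inter_subset_inter_right hst)))

variable [Fintype σ]

variable (σ) in
/-- The elementary symmetric polynomials `e_d, e_{d-1}, …, e_1` in all variables. -/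
noncomputable def esymmSeq : ℕ → List (MvPolynomial σ K)
  | 0 => []
  | d + 1 => esymm σ K (d + 1) :: esymmSeq d

/-- For `d = |σ| - |Z|`, the polynomial `e_d` is congruent modulo `(x_i : i ∈ Z)` to the product
of the remaining variables, a nonzerodivisor; what is left is `I_d` on those variables. -/
lemma regOn_linear {d : ℕ} (Z : Finset σ) (hZ : Z.card + (d + 1) = Fintype.card σ)
    (ih : RegOn (suppIdeal K (upper Zᶜ (d + 1) Z)) (esymmSeq σ K d))
    {U : Set (Finset σ)} (hU : U = {s | ∃ i ∈ Z, i ∈ s}) :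
    RegOn (suppIdeal K U) (esymmSeq σ K (d + 1)) := by
  subst hU
  have hup : IsUpperSet {s : Finset σ | ∃ i ∈ Z, i ∈ s} :=
    fun s t hst ⟨i, hi, his⟩ => ⟨i, hi, hst his⟩
  have hc : Zᶜ.card = d + 1 := by rw [Finset.card_compl]; omega
  have hmem : Zᶜ ∈ Finset.powersetCard (d + 1) (Finset.univ : Finset σ) := by
    simp [Finset.mem_powersetCard, hc]
  refine RegOn.cons_congr (b := ∏ i ∈ Zᶜ, X i) ?_ ⟨fun y hy => ?_, ?_⟩
  · rw [esymm, ← Finset.add_sum_erase _ _ hmem, add_sub_cancel_left]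
    refine Ideal.sum_mem _ fun t ht => prod_mem_suppIdeal K ?_
    by_contra hne
    obtain ⟨h1, h2⟩ := Finset.mem_erase.1 ht
    refine h1 (Finset.eq_of_subset_of_card_le (fun i hi => ?_) ?_)
    · exact Finset.mem_compl.2 fun hiZ => hne ⟨i, hiZ, hi⟩
    · rw [(Finset.mem_powersetCard.1 h2).2, hc]
  · rw [prod_mul_mem_suppIdeal K hup] at hy
    convert hy using 3
    ext s
    simp only [Set.mem_ofPred_eq, Finset.mem_union, Finset.mem_compl]
    exact exists_congr fun i => and_congr_right fun hi => by simp [hi]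
  · rw [suppIdeal_sup_prod]
    convert ih using 2
    ext s
    simp only [upper, Set.mem_ofPred_eq]
    refine or_congr Iff.rfl ?_
    rw [← hc]
    constructor
    · intro h
      rw [Finset.inter_eq_right.2 h]
    · intro h
      rw [← Finset.eq_of_subset_of_card_le Finset.inter_subset_right h]
      exact Finset.inter_subset_left

/-- With `d = |σ| - |Z| - |A| + q - 1`, the sequence `e_d, …, e_1` is regular modulo
`(x_i : i ∈ Z) + I_q(A)`. -/
theorem regOn_upper (d : ℕ) (A : Finset σ) (q : ℕ) (Z : Finset σ) (hAZ : Disjoint A Z)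
    (h0 : 1 ≤ q) (hq : q ≤ A.card + 1) (hd : d + A.card + Z.card + 1 = q + Fintype.card σ) :
    RegOn (suppIdeal K (upper A q Z)) (esymmSeq σ K d) := by
  induction d generalizing A q Z with
  | zero => trivial
  | succ d ihd =>
    have base : ∀ (Z : Finset σ) (U : Set (Finset σ)), Z.card + (d + 1) = Fintype.card σ →
        U = {s | ∃ i ∈ Z, i ∈ s} → RegOn (suppIdeal K U) (esymmSeq σ K (d + 1)) := by
      intro Z U hZ hU
      have hc : Zᶜ.card = d + 1 := by rw [Finset.card_compl]; omega
      exact regOn_linear K Z hZ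
        (ihd Zᶜ (d + 1) Z disjoint_compl_left (by omega) (by omega) (by omega)) hU
    induction A using Finset.induction_on generalizing q Z with
    | empty =>
      refine base Z _ (by simp at hd hq; omega) ?_
      ext s
      simp [upper]
      omega
    | insert a A ha ihA =>
      rw [Finset.card_insert_of_notMem ha] at hq hd
      rw [Finset.disjoint_insert_left] at hAZ
      rcases hq.eq_or_lt with rfl | hq
      · -- here `I_q(A) = 0`
        refine base Z _ (by omega) ?_
        ext s
        have := Finset.card_le_card (Finset.inter_subset_right : s ∩ insert a A ⊆ insert a A)
        rw [Finset.card_insert_of_notMem ha] at this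
        simp only [upper, Set.mem_ofPred_eq, or_iff_left_iff_imp]
        omega
      obtain ⟨q, rfl⟩ : ∃ q', q = q' + 1 := ⟨q - 1, by omega⟩
      rcases Nat.eq_zero_or_pos q with rfl | hq0
      · -- here `I_q(A)` is spanned by variables
        refine base (Z ∪ insert a A) _ ?_ ?_
        · rw [Finset.card_union_of_disjoint, Finset.card_insert_of_notMem ha]
          · omega
          · rw [Finset.disjoint_insert_right]
            exact ⟨hAZ.1, hAZ.2.symm⟩
        · ext s
          simp only [upper, Set.mem_ofPred_eq, Finset.mem_union, zero_add, Finset.one_le_card,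
            Finset.Nonempty, Finset.mem_inter]
          constructor
          · rintro (⟨i, h1, h2⟩ | ⟨i, h1, h2⟩)
            exacts [⟨i, Or.inl h1, h2⟩, ⟨i, Or.inr h2, h1⟩]
          · rintro ⟨i, h1 | h1, h2⟩
            exacts [Or.inl ⟨i, h1, h2⟩, Or.inr ⟨i, h2, h1⟩]
      refine RegOn.of_colon (∏ i ∈ {a}, X i) _ _ _
        (prod_mul_mem_suppIdeal K (isUpperSet_upper _ _ _) {a}) ?_ ?_
      · convert ihA q Z hAZ.2 hq0 (by omega) (by omega) using 2
        ext s
        have e : (s ∪ {a}) ∩ insert a A = insert a (s ∩ A) := by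
          ext i
          simp only [Finset.mem_inter, Finset.mem_union, Finset.mem_insert, Finset.mem_singleton]
          tauto
        simp only [upper, Set.mem_ofPred_eq]
        rw [e, Finset.card_insert_of_notMem (by simp [ha]), Nat.add_le_add_iff_right]
        refine or_congr (exists_congr fun i => and_congr_right fun hi => ?_) Iff.rfl
        have : i ≠ a := fun h => hAZ.1 (h ▸ hi)
        simp [this]
      · rw [suppIdeal_sup_prod]
        convert ihA (q + 1) (insert a Z) ?_ (by omega) (by omega) ?_ using 2
        · ext s
          simp only [upper, Set.mem_ofPred_eq, Finset.singleton_subset_iff, Finset.exists_mem_insert]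
          by_cases has : a ∈ s
          · simp [has]
          · have e : s ∩ insert a A = s ∩ A := Finset.inter_insert_of_notMem has
            simp [has, e]
        · rw [Finset.disjoint_insert_right]
          exact ⟨ha, hAZ.2⟩
        · rw [Finset.card_insert_of_notMem hAZ.1]
          omega

omit [DecidableEq σ] in
lemma length_esymmSeq (d : ℕ) : (esymmSeq σ K d).length = d := by
  induction d with
  | zero => rfl
  | succ d ih => simp [esymmSeq, ih]

omit [DecidableEq σ] in
lemma esymmSeq_mem (d : ℕ) : ∀ f ∈ esymmSeq σ K d, f ∈ Ideal.span (Set.range (X (R := K))) := by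
  induction d with
  | zero => simp [esymmSeq]
  | succ d ih =>
    intro f hf
    rcases List.mem_cons.1 hf with rfl | hf
    · refine Ideal.sum_mem _ fun t ht => ?_
      obtain ⟨i, hi⟩ : t.Nonempty := Finset.card_pos.1 (by
        rw [(Finset.mem_powersetCard.1 ht).2]; omega)
      exact Ideal.mem_of_dvd _ (Finset.dvd_prod_of_mem X hi) (Ideal.subset_span ⟨i, rfl⟩)
    · exact ih f hf

/-- `S/P` is a quotient of the polynomial ring in the variables outside `P`. -/
lemma dim_quotient_le (P : Ideal (MvPolynomial σ K)) (B : Finset σ) (hB : ∀ i ∉ B, X i ∈ P) :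
    ringKrullDim (MvPolynomial σ K ⧸ P) ≤ (B.card : ℕ) := by
  let φ : MvPolynomial B K →ₐ[K] (MvPolynomial σ K ⧸ P) :=
    aeval fun i => Ideal.Quotient.mk P (X i.1)
  have hφ : Function.Surjective φ := by
    intro y
    obtain ⟨f, rfl⟩ := Ideal.Quotient.mk_surjective y
    change Ideal.Quotient.mk P f ∈ φ.range
    induction f using MvPolynomial.induction_on with
    | C a => exact φ.range.algebraMap_mem a
    | add f g hf hg => rw [map_add]; exact add_mem hf hg
    | mul_X f i hf =>
      rw [map_mul]
      refine mul_mem hf ?_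
      by_cases hi : i ∈ B
      · exact ⟨X ⟨i, hi⟩, by simp [φ]⟩
      · rw [Ideal.Quotient.eq_zero_iff_mem.2 (hB i hi)]
        exact zero_mem _
  refine (ringKrullDim_le_of_surjective φ.toRingHom hφ).trans ?_
  rw [MvPolynomial.ringKrullDim_of_isNoetherianRing, ringKrullDim_eq_zero_of_field]
  simp

end Monomial

/-! ### Krull dimension and depth of `S/I_q` -/

/-- The dimension of `R/I` is bounded by those of `R/P` for the primes `P ⊇ I`. -/
lemma dim_quotient_le_of_primes {R : Type} [CommRing R] (I : Ideal R) (N : WithBot ℕ∞)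
    (h : ∀ P : Ideal R, P.IsPrime → I ≤ P → ringKrullDim (R ⧸ P) ≤ N) :
    ringKrullDim (R ⧸ I) ≤ N := by
  rw [ringKrullDim_quotient, Order.krullDim_eq_iSup_coheight]
  refine iSup_le fun P => ?_
  rw [Order.coheight_eq_krullDim_Ici]
  refine le_trans ?_ (h P.1.asIdeal P.1.2 P.2)
  rw [ringKrullDim_quotient]
  exact Order.krullDim_le_of_strictMono (fun Q => ⟨Q.1.1, Q.2⟩) fun _ _ hab => hab

/-- The indices of the variables `x_1, …, x_n`. -/
def xVars (n m : ℕ) : Finset (Fin (n + m)) := Finset.univ.filter fun i => (i : ℕ) < n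

lemma card_xVars (n m : ℕ) : (xVars n m).card = n := by
  have : xVars n m = Finset.univ.map (Fin.castAddEmb m) := by
    ext i
    simp only [xVars, Finset.mem_filter, Finset.mem_univ, true_and, Finset.mem_map]
    exact ⟨fun h => ⟨⟨i, h⟩, rfl⟩, fun ⟨j, hj⟩ => hj ▸ j.2⟩
  rw [this, Finset.card_map, Finset.card_fin]

lemma Iq_eq (K : Type) [Field K] (n m q : ℕ) :
    Iq K n m q = suppIdeal K (upper (xVars n m) q ∅) := by
  apply le_antisymm
  · refine Ideal.span_le.2 ?_
    rintro _ ⟨s, hs, hc, rfl⟩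
    refine prod_mem_suppIdeal K (Or.inr ?_)
    rw [Finset.inter_eq_left.2 fun i hi => by simpa [xVars] using hs i hi, hc]
  · refine Ideal.span_le.2 ?_
    rintro _ ⟨m, ⟨i, hi, _⟩ | hm, rfl⟩
    · simp at hi
    obtain ⟨s, hs, hc⟩ := Finset.exists_subset_card_eq hm
    rw [Finset.subset_inter_iff] at hs
    refine Ideal.mem_of_dvd _ (prod_dvd_monomial K hs.1) (Ideal.subset_span ⟨s, ?_, hc, rfl⟩)
    intro i hi
    simpa [xVars] using hs.2 hi

lemma dim_Iq_le (K : Type) [Field K] (n m q : ℕ) :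
    ringKrullDim (MvPolynomial (Fin (n + m)) K ⧸ Iq K n m q) ≤ ((m + q - 1 : ℕ) : WithBot ℕ∞) := by
  classical
  refine dim_quotient_le_of_primes _ _ fun P hP hI => ?_
  -- `P` contains `I_q`, so fewer than `q` of the `x`-variables lie outside `P`.
  set F := (xVars n m).filter fun i => (X i : MvPolynomial (Fin (n + m)) K) ∉ P with hF
  have hFc : F.card < q := by
    by_contra! hge
    obtain ⟨s, hs, hc⟩ := Finset.exists_subset_card_eq hge
    have hmem : (∏ i ∈ s, X i : MvPolynomial (Fin (n + m)) K) ∈ P := by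
      refine hI (Ideal.subset_span ⟨s, fun i hi => ?_, hc, rfl⟩)
      simpa [xVars] using (Finset.mem_filter.1 (hs hi)).1
    obtain ⟨i, hi, hiP⟩ := hP.prod_mem_iff.1 hmem
    exact (Finset.mem_filter.1 (hs hi)).2 hiP
  refine (dim_quotient_le K P (F ∪ (xVars n m)ᶜ) fun i hi => ?_).trans ?_
  · simp only [hF, Finset.mem_union, Finset.mem_filter, Finset.mem_compl] at hi
    tauto
  · have h1 := Finset.card_union_le F (xVars n m)ᶜ
    rw [Finset.card_compl, card_xVars, Fintype.card_fin] at h1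
    exact_mod_cast (by omega : (F ∪ (xVars n m)ᶜ).card ≤ m + q - 1)

lemma irrelevantMax_ne_top (K : Type) [Field K] (n m q : ℕ) (h0 : 0 < q) :
    irrelevantMax K (n + m) (Iq K n m q) ≠ ⊤ := by
  have hI : Iq K n m q ≤ Ideal.span (Set.range X) := by
    refine Ideal.span_le.2 ?_
    rintro _ ⟨s, _, hc, rfl⟩
    obtain ⟨i, hi⟩ : s.Nonempty := Finset.card_pos.1 (by omega)
    exact Ideal.mem_of_dvd _ (Finset.dvd_prod_of_mem X hi) (Ideal.subset_span ⟨i, rfl⟩)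
  have hX : Ideal.span (Set.range X) ≤
      RingHom.ker (constantCoeff (R := K) (σ := Fin (n + m))) := by
    refine Ideal.span_le.2 ?_
    rintro _ ⟨i, rfl⟩
    simp
  intro h
  have h1 : (1 : MvPolynomial (Fin (n + m)) K) ∈ Ideal.span (Set.range X) := by
    rw [← Ideal.mem_quotient_iff_mem hI]
    change _ ∈ irrelevantMax K (n + m) (Iq K n m q)
    rw [h]
    trivial
  simpa using hX h1

/-- Proposition 4.2(1): for `0 < q ≤ n`, `S/I_q` is Cohen–Macaulay, of Krull dimension
`m + q - 1`. -/
theorem cm_Iq (K : Type) [Field K] (n m q : ℕ) (h0 : 0 < q) (hn : q ≤ n) :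
    IsCohenMacaulay (MvPolynomial (Fin (n + m)) K ⧸ Iq K n m q)
        (irrelevantMax K (n + m) (Iq K n m q)) ∧
      ringKrullDim (MvPolynomial (Fin (n + m)) K ⧸ Iq K n m q) = ((m + q - 1 : ℕ) : WithBot ℕ∞) := by
  have hreg : RegOn (Iq K n m q) (esymmSeq (Fin (n + m)) K (m + q - 1)) := by
    rw [Iq_eq]
    apply regOn_upper
    · exact Finset.disjoint_empty_right _
    · exact h0
    · rw [card_xVars]; omega
    · rw [card_xVars, Finset.card_empty, Fintype.card_fin]; omega
  set l := (esymmSeq (Fin (n + m)) K (m + q - 1)).map (Ideal.Quotient.mk (Iq K n m q)) with hl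
  have hlJ : ∀ x ∈ l, x ∈ irrelevantMax K (n + m) (Iq K n m q) := by
    intro x hx
    obtain ⟨f, hf, rfl⟩ := List.mem_map.1 hx
    exact Ideal.mem_map_of_mem _ (esymmSeq_mem K _ f hf)
  have hlreg : IsRegularSeq _ l := hreg.isRegularSeq fun htop =>
    irrelevantMax_ne_top K n m q h0 (top_le_iff.1 (htop ▸ Ideal.span_le.2 hlJ))
  have hlen : l.length = m + q - 1 := by rw [hl, List.length_map, length_esymmSeq]
  have hdim : ringKrullDim (MvPolynomial (Fin (n + m)) K ⧸ Iq K n m q) =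
      ((m + q - 1 : ℕ) : WithBot ℕ∞) :=
    le_antisymm (dim_Iq_le K n m q) (hlen ▸ hlreg.length_le)
  refine ⟨?_, hdim⟩
  have hdepth : ringDepth _ (irrelevantMax K (n + m) (Iq K n m q)) = ((m + q - 1 : ℕ) : ℕ∞) := by
    apply le_antisymm
    · refine sSup_le ?_
      rintro _ ⟨l', -, hl', rfl⟩
      have := hl'.length_le
      rw [hdim] at this
      exact_mod_cast this
    · exact le_sSup ⟨l, hlJ, hlreg, by rw [hlen]⟩
  rw [IsCohenMacaulay, hdim, hdepth]
  rfl
end
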